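/- Let n be a positive even integer. If H is a spanning subgraph of the complete graph K_n such that every edge of H joins a vertex of odd degree in H to a vertex of even degree in H, then H has at most n(n-2)/4 edges. -/

import Mathlib

/-!
Let `A` and `B` be the sets of vertices of odd and of even degree, with `a` and `b` elements.
Then `H` is bipartite with parts `A` and `B`, so its number of edges is the sum of the degrees
over `A`. By the handshake lemma `a` is even, hence so is `b = n - a`. A vertex of `A` has odd
degree at most `b`, hence degree at most `b - 1`. With `n = 2 m` this bounds the number of edges
by `a (2 m - 1 - a)`, which is at most `m (m - 1) = n (n - 2) / 4` for every integer `a`, because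
`(a - m) (a - m + 1)` is a product of consecutive integers.
-/

/-- For a positive even integer `n`, a spanning subgraph `H` of `K_n` in which every
edge joins a vertex of odd degree to a vertex of even degree has at most
`n (n - 2) / 4` edges. -/
theorem card_edges_le_of_odd_even (n : ℕ) (hpos : 0 < n) (hn : Even n)
    (H : SimpleGraph (Fin n)) [DecidableRel H.Adj]
    (h : ∀ u v : Fin n, H.Adj u v → (Odd (H.degree u) ↔ Even (H.degree v))) :
    H.edgeFinset.card ≤ n * (n - 2) / 4 := by
  classical
  let A : Finset (Fin n) := {v | Odd (H.degree v)}
  let B : Finset (Fin n) := {v | ¬ Odd (H.degree v)}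
  have hbip : H.IsBipartiteWith (A : Set (Fin n)) (B : Set (Fin n)) := by
    refine ⟨?_, ?_⟩
    · rw [Finset.disjoint_coe]
      exact Finset.disjoint_filter_filter_not _ _ _
    · intro u v huv
      have h1 := h u v huv
      simp only [A, B, Finset.coe_filter, Set.mem_ofPred_eq, Finset.mem_univ, true_and]
      rw [← Nat.not_odd_iff_even] at h1
      tauto
  have hA : Even A.card := by
    convert H.even_card_odd_degree_vertices
  have hAB : A.card + B.card = n := by
    have h1 := Finset.card_filter_add_card_filter_not
      (s := (Finset.univ : Finset (Fin n))) (fun v => Odd (H.degree v))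
    rwa [Finset.card_univ, Fintype.card_fin] at h1
  have hdeg : ∀ v ∈ A, (H.degree v : ℤ) ≤ B.card - 1 := by
    intro v hv
    have h1 : H.degree v ≤ B.card := SimpleGraph.isBipartiteWith_degree_le hbip hv
    have h2 : Odd (H.degree v) := (Finset.mem_filter.mp hv).2
    grind
  have hE : (H.edgeFinset.card : ℤ) ≤ A.card * (B.card - 1) := by
    rw [← SimpleGraph.isBipartiteWith_sum_degrees_eq_card_edges hbip]
    push_cast
    simpa using Finset.sum_le_card_nsmul A _ _ hdeg
  obtain ⟨m, rfl⟩ := hn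
  obtain ⟨k, rfl⟩ : ∃ k, m = k + 1 := ⟨m - 1, by omega⟩
  have hval : (k + 1 + (k + 1)) * (k + 1 + (k + 1) - 2) / 4 = (k + 1) * k := by
    rw [show k + 1 + (k + 1) - 2 = 2 * k by omega]
    rw [show (k + 1 + (k + 1)) * (2 * k) = 4 * ((k + 1) * k) by ring]
    exact Nat.mul_div_cancel_left _ (by norm_num)
  rw [hval]
  zify at hAB ⊢
  -- `(a - m) (a - m + 1) ≥ 0` with `m = k + 1`
  have hprod : 0 ≤ ((A.card : ℤ) - (k + 1)) * (A.card - k) := by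
    rcases le_or_gt (A.card : ℤ) k with hk | hk
    · exact mul_nonneg_of_nonpos_of_nonpos (by omega) (by omega)
    · exact mul_nonneg (by omega) (by omega)
  have hb : (B.card : ℤ) = 2 * k + 2 - A.card := by linarith
  rw [hb] at hE
  linarith
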